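/- arXiv:1702.01543 — 2 statements merged into one kernel-verified Lean document; each statement's English description precedes it below -/
import Mathlib

section
/- Let d and t be positive integers and let h_1, …, h_t ∈ ℝ^d be such that the additive subgroup h_1ℤ + h_2ℤ + ⋯ + h_tℤ is dense in ℝ^d. Let W and H be finite-dimensional linear subspaces of C(ℝ^d, ℂ), and let m_1, …, m_t be positive integers such that Δ_{h_k}^{m_k}(W) ⊆ H and Δ_{h_k}^{m_k}(H) ⊆ H for every k = 1, …, t. Then there exists a finite-dimensional translation-invariant linear subspace Z of C(ℝ^d, ℂ) that contains W ∪ H; consequently, every element of W ∪ H is a continuous exponential polynomial. -/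
/-- Forward difference operator: `(fd h f) x = f (x + h) - f x`. -/
def fd {α : Type*} [Add α] (h : α) (f : α → ℂ) : α → ℂ := fun x => f (x + h) - f x

/-- `f : ℝ^d → ℂ` is a continuous exponential polynomial:
`f x = ∑ j, p j (x) * exp (⟨λ_j, x⟩)` with `p j` polynomials in `d` variables
with complex coefficients and `λ_j ∈ ℂ^d`. -/
def IsExpPoly (d : ℕ) (f : (Fin d → ℝ) → ℂ) : Prop :=
  ∃ (n : ℕ) (p : Fin n → MvPolynomial (Fin d) ℂ) (lam : Fin n → Fin d → ℂ),
    ∀ x, f x = ∑ j, (MvPolynomial.eval (fun i => (x i : ℂ)) (p j)) *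
      Complex.exp (∑ i, lam j i * (x i : ℂ))


/-- Closing a finite-dimensional space under commuting operators, one operator at a time. -/
theorem exists_invariant_aux {E : Type*} [AddCommGroup E] [Module ℂ E] {t : ℕ}
    (L : Fin t → Module.End ℂ E) (hL : ∀ i j, Commute (L i) (L j)) (m : Fin t → ℕ)
    (C V : Submodule ℂ E) (hVC : V ≤ C) (hC : ∀ k, ∀ g ∈ C, L k g ∈ C)
    (hfin : FiniteDimensional ℂ V) (hm : ∀ k, 0 < m k)
    (hV : ∀ k, ∀ g ∈ V, (L k ^ m k) g ∈ V) (s : Finset (Fin t)) :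
    ∃ Z : Submodule ℂ E, FiniteDimensional ℂ Z ∧ V ≤ Z ∧ Z ≤ C ∧
      (∀ k ∈ s, ∀ g ∈ Z, L k g ∈ Z) ∧ (∀ k, ∀ g ∈ Z, (L k ^ m k) g ∈ Z) := by
  induction s using Finset.induction_on with
  | empty => exact ⟨V, hfin, le_rfl, hVC, by simp, hV⟩
  | insert a s has ih =>
    obtain ⟨Z, hZf, hVZ, hZC, h1, h2⟩ := ih
    have key : ∀ P : Module.End ℂ E, Commute P (L a) → (∀ g ∈ Z, P g ∈ Z) →
        ∀ g ∈ (⨆ j : Fin (m a), Z.map (L a ^ (j : ℕ))), 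
          P g ∈ (⨆ j : Fin (m a), Z.map (L a ^ (j : ℕ))) := by
      intro P hP hPZ g hg
      induction hg using Submodule.iSup_induction' with
      | mem j x hx =>
        obtain ⟨y, hy, rfl⟩ := hx
        refine Submodule.mem_iSup_of_mem j ⟨P y, hPZ y hy, ?_⟩
        have := (hP.pow_right (j : ℕ)).eq
        exact (LinearMap.congr_fun this y).symm
      | zero => simp
      | add x y _ _ hx hy => rw [map_add]; exact add_mem hx hy
    refine ⟨⨆ j : Fin (m a), Z.map (L a ^ (j : ℕ)), inferInstance, ?_, ?_, ?_, ?_⟩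
    · intro g hg
      exact Submodule.mem_iSup_of_mem ⟨0, hm a⟩ ⟨g, hVZ hg, by simp⟩
    · refine iSup_le fun j => ?_
      rintro _ ⟨y, hy, rfl⟩
      have : ∀ n : ℕ, (L a ^ n) y ∈ C := by
        intro n
        induction n with
        | zero => simpa using hZC hy
        | succ n ih => rw [pow_succ']; exact hC a _ ih
      exact this j
    · intro k hk g hg
      rcases Finset.mem_insert.1 hk with rfl | hk
      · induction hg using Submodule.iSup_induction' with
        | mem j x hx =>
          obtain ⟨y, hy, rfl⟩ := hx
          have e : L k ((L k ^ (j : ℕ)) y) = (L k ^ ((j : ℕ) + 1)) y := by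
            rw [pow_succ']; rfl
          rw [e]
          by_cases hj : (j : ℕ) + 1 < m k
          · exact Submodule.mem_iSup_of_mem ⟨_, hj⟩ ⟨y, hy, rfl⟩
          · have : (j : ℕ) + 1 = m k := by have := j.2; omega
            rw [this]
            exact Submodule.mem_iSup_of_mem ⟨0, hm k⟩ ⟨_, h2 k y hy, by simp⟩
        | zero => simp
        | add x y _ _ hx hy => rw [map_add]; exact add_mem hx hy
      · exact key _ (hL _ _) (h1 k hk) g hg
    · intro k g hg
      exact key _ ((hL _ _).pow_left _) (h2 k) g hg

/-- Translation as a linear map. -/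
def transL (d : ℕ) (y : Fin d → ℝ) : Module.End ℂ ((Fin d → ℝ) → ℂ) where
  toFun f := fun x => f (x + y)
  map_add' _ _ := rfl
  map_smul' _ _ := rfl

theorem transL_add (d : ℕ) (y z : Fin d → ℝ) : transL d (y + z) = transL d y * transL d z := by
  ext f x
  simp [transL, add_assoc, Module.End.mul_apply]

theorem transL_commute (d : ℕ) (y z : Fin d → ℝ) : Commute (transL d y) (transL d z) := by
  rw [Commute, SemiconjBy, ← transL_add, ← transL_add, add_comm]

theorem transL_zero (d : ℕ) : transL d 0 = 1 := by
  ext f x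
  simp [transL]

theorem transL_invariant (d t : ℕ) (h : Fin t → Fin d → ℝ)
    (hdense : Dense ((AddSubgroup.closure (Set.range h) :
      AddSubgroup (Fin d → ℝ)) : Set (Fin d → ℝ)))
    (Z : Submodule ℂ ((Fin d → ℝ) → ℂ)) (hf : FiniteDimensional ℂ Z)
    (hc : ∀ g ∈ Z, Continuous g) (hZ : ∀ k, ∀ g ∈ Z, transL d (h k) g ∈ Z) :
    ∀ y, ∀ g ∈ Z, transL d y g ∈ Z := by
  have hclosed : IsClosed (Z : Set ((Fin d → ℝ) → ℂ)) := Submodule.closed_of_finiteDimensional Z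
  have hG : ∀ y ∈ AddSubgroup.closure (Set.range h), ∀ g ∈ Z, transL d y g ∈ Z := by
    intro y hy
    induction hy using AddSubgroup.closure_induction with
    | mem x hx => obtain ⟨k, rfl⟩ := hx; exact hZ k
    | zero => intro g hg; simpa [transL_zero] using hg
    | add x y _ _ hx hy => intro g hg; rw [transL_add]; exact hx _ (hy _ hg)
    | neg x _ hx =>
      intro g hg
      have inv : ∀ f, transL d (-x) (transL d x f) = f := by
        intro f
        rw [← Module.End.mul_apply, ← transL_add]; simp [transL_zero]
      have hinj : Function.Injective ((transL d x).restrict hx) := by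
        intro a b hab
        have : transL d x a = transL d x b := congrArg Subtype.val hab
        apply Subtype.ext
        rw [← inv a, this, inv]
      obtain ⟨a, ha⟩ := LinearMap.surjective_of_injective hinj ⟨g, hg⟩
      have : transL d x a = g := congrArg Subtype.val ha
      rw [← this, inv]
      exact a.2
  intro y g hg
  have hcont : Continuous fun y => transL d y g := by
    refine continuous_pi fun x => ?_
    exact (hc g hg).comp (continuous_const.add continuous_id)
  have : IsClosed {y | transL d y g ∈ Z} := hclosed.preimage hcont
  have h2 : closure ((AddSubgroup.closure (Set.range h) : AddSubgroup (Fin d → ℝ)) : Set (Fin d → ℝ))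
      ⊆ {y | transL d y g ∈ Z} := closure_minimal (fun y hy => hG y hy g hg) this
  exact h2 (hdense y)

theorem IsExpPoly.zero' (d : ℕ) : IsExpPoly d (fun _ => 0) :=
  ⟨0, Fin.elim0, Fin.elim0, by simp⟩

theorem IsExpPoly.add' {d : ℕ} {f g : (Fin d → ℝ) → ℂ} (hf : IsExpPoly d f) (hg : IsExpPoly d g) :
    IsExpPoly d (fun x => f x + g x) := by
  obtain ⟨n, p, l, h⟩ := hf
  obtain ⟨n', p', l', h'⟩ := hg
  refine ⟨n + n', Fin.append p p', Fin.append l l', fun x => ?_⟩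
  simp [Fin.sum_univ_add, h, h']

theorem IsExpPoly.mul' {d : ℕ} {f g : (Fin d → ℝ) → ℂ} (hf : IsExpPoly d f) (hg : IsExpPoly d g) :
    IsExpPoly d (fun x => f x * g x) := by
  obtain ⟨n, p, l, h⟩ := hf
  obtain ⟨n', p', l', h'⟩ := hg
  refine ⟨n * n', fun j => p (finProdFinEquiv.symm j).1 * p' (finProdFinEquiv.symm j).2,
    fun j => l (finProdFinEquiv.symm j).1 + l' (finProdFinEquiv.symm j).2, fun x => ?_⟩
  simp only
  rw [h, h', Finset.sum_mul_sum, ← Fintype.sum_prod_type', ← finProdFinEquiv.symm.sum_comp]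
  refine Finset.sum_congr rfl fun j _ => ?_
  simp only [map_mul, Pi.add_apply, add_mul, Finset.sum_add_distrib, Complex.exp_add]
  ring

theorem IsExpPoly.const' (d : ℕ) (c : ℂ) : IsExpPoly d (fun _ => c) :=
  ⟨1, fun _ => MvPolynomial.C c, fun _ _ => 0, by simp⟩

theorem IsExpPoly.coord (d : ℕ) (i : Fin d) : IsExpPoly d (fun x => (x i : ℂ)) :=
  ⟨1, fun _ => MvPolynomial.X i, fun _ _ => 0, by simp⟩

theorem IsExpPoly.exp' (d : ℕ) (i : Fin d) (c : ℂ) :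
    IsExpPoly d (fun x => Complex.exp (c * (x i : ℂ))) :=
  ⟨1, fun _ => 1, fun _ => Pi.single i c, by simp [Pi.single_apply]⟩

theorem IsExpPoly.sum' {d : ℕ} {ι : Type*} (s : Finset ι) (f : ι → (Fin d → ℝ) → ℂ)
    (hf : ∀ i ∈ s, IsExpPoly d (f i)) : IsExpPoly d (fun x => ∑ i ∈ s, f i x) := by
  classical
  induction s using Finset.induction_on with
  | empty => simpa using IsExpPoly.zero' d
  | insert a s ha ih =>
    simp only [Finset.sum_insert ha]
    exact (hf a (by simp)).add' (ih fun i hi => hf i (by simp [hi]))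

theorem IsExpPoly.pow' {d : ℕ} {f : (Fin d → ℝ) → ℂ} (hf : IsExpPoly d f) (n : ℕ) :
    IsExpPoly d (fun x => f x ^ n) := by
  induction n with
  | zero => simpa using IsExpPoly.const' d 1
  | succ n ih => simp only [pow_succ]; exact ih.mul' hf

/-- A continuous one-parameter group in a Banach algebra has a generator. -/
theorem oneParam_hasDerivAt {A : Type*} [NormedRing A] [NormedAlgebra ℝ A] [CompleteSpace A]
    (φ : ℝ → A) (hφ : Continuous φ) (h0 : φ 0 = 1) (hadd : ∀ s t, φ (s + t) = φ s * φ t) :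
    ∃ a : A, ∀ s, HasDerivAt φ (φ s * a) s := by
  have hI : ∀ s, HasDerivAt (fun s => ∫ u in (0:ℝ)..s, φ u) (φ s) s := fun s =>
    intervalIntegral.integral_hasDerivAt_right (hφ.intervalIntegrable _ _)
      (hφ.stronglyMeasurableAtFilter _ _) hφ.continuousAt
  set I : ℝ → A := fun s => ∫ u in (0:ℝ)..s, φ u with hIdef
  have hlim : Filter.Tendsto (fun t : ℝ => t⁻¹ • I t) (nhdsWithin 0 {0}ᶜ) (nhds 1) := by
    have := (hI 0).tendsto_slope_zero
    simpa [h0, hIdef] using this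
  have hunit : ∀ᶠ t in nhdsWithin (0:ℝ) {0}ᶜ, IsUnit (t⁻¹ • I t) :=
    hlim.eventually (Units.isOpen.mem_nhds (isUnit_one : IsUnit (1 : A)))
  obtain ⟨r, ⟨w, hw⟩, hr⟩ := (hunit.and self_mem_nhdsWithin).exists
  have hshift : ∀ s, φ s * I r = I (s + r) - I s := by
    intro s
    have e1 : φ s * I r = ∫ u in (0:ℝ)..r, φ (s + u) := by
      simp only [hadd, hIdef]
      exact ((ContinuousLinearMap.mul ℝ A (φ s)).intervalIntegral_comp_comm
        (hφ.intervalIntegrable _ _)).symm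
    rw [e1, intervalIntegral.integral_comp_add_left (fun u => φ u), add_zero, hIdef]
    simp only
    rw [intervalIntegral.integral_interval_sub_left (hφ.intervalIntegrable _ _)
      (hφ.intervalIntegrable _ _)]
  have hφeq : ∀ s, φ s = (r⁻¹ • (I (s + r) - I s)) * ↑w⁻¹ := by
    intro s
    rw [← hshift, ← mul_smul_comm, ← hw, mul_assoc, Units.mul_inv, mul_one]
  have hd0 : HasDerivAt φ ((r⁻¹ • (φ (0 + r) - φ 0)) * ↑w⁻¹) 0 := by
    have h1 : HasDerivAt (fun s => (r⁻¹ • (I (s + r) - I s)) * (↑w⁻¹ : A))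
        ((r⁻¹ • (φ (0 + r) - φ 0)) * ↑w⁻¹) 0 := by
      have h3 : HasDerivAt (fun s => I (s + r)) (φ (0 + r)) 0 :=
        HasDerivAt.comp_add_const 0 r (hI (0 + r))
      exact ((h3.sub (hI 0)).const_smul r⁻¹).mul_const (↑w⁻¹ : A)
    exact h1.congr_of_eventuallyEq (Filter.Eventually.of_forall hφeq)
  refine ⟨(r⁻¹ • (φ (0 + r) - φ 0)) * ↑w⁻¹, fun s => ?_⟩
  have h2 : HasDerivAt (fun u => φ s * φ (u - s)) (φ s * ((r⁻¹ • (φ (0 + r) - φ 0)) * ↑w⁻¹)) s := by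
    refine HasDerivAt.const_mul _ ?_
    have : HasDerivAt φ ((r⁻¹ • (φ (0 + r) - φ 0)) * ↑w⁻¹) (s - s) := by simpa using hd0
    exact HasDerivAt.comp_sub_const s s this
  refine h2.congr_of_eventuallyEq (Filter.Eventually.of_forall fun u => ?_)
  simp only
  rw [← hadd]; congr 1; ring

theorem oneParam_genEigen {n : ℕ} (φ : ℝ → (Fin n → ℂ) →L[ℂ] (Fin n → ℂ)) (h0 : φ 0 = 1)
    (a : (Fin n → ℂ) →L[ℂ] (Fin n → ℂ)) (ha : ∀ s, HasDerivAt φ (φ s * a) s) (μ : ℂ) (k : ℕ) :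
    ∀ v, (((a : Module.End ℂ (Fin n → ℂ)) - μ • (1 : Module.End ℂ (Fin n → ℂ))) ^ k) v = 0 →
      ∀ s : ℝ, Complex.exp (-μ * s) • φ s v = ∑ j ∈ Finset.range k,
        ((s : ℂ) ^ j / (j.factorial : ℂ)) •
          (((a : Module.End ℂ (Fin n → ℂ)) - μ • (1 : Module.End ℂ (Fin n → ℂ))) ^ j) v := by
  set N : Module.End ℂ (Fin n → ℂ) :=
    (a : Module.End ℂ (Fin n → ℂ)) - μ • (1 : Module.End ℂ (Fin n → ℂ)) with hN
  induction k with
  | zero => intro v hv s; simp at hv; simp [hv]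
  | succ k ih =>
    intro v hv
    have hNv : (N ^ k) (N v) = 0 := by rw [pow_succ] at hv; exact hv
    have hexp : ∀ s : ℝ, HasDerivAt (fun s : ℝ => Complex.exp (-μ * s))
        (Complex.exp (-μ * s) * (-μ)) s := by
      intro s
      have h1 : HasDerivAt (fun z : ℂ => Complex.exp (-μ * z)) (Complex.exp (-μ * s) * (-μ)) (s : ℂ) := by
        simpa using ((hasDerivAt_id (s : ℂ)).const_mul (-μ)).cexp
      exact h1.comp_ofReal
    have hφv : ∀ s : ℝ, HasDerivAt (fun s => φ s v) (φ s (a v)) s := by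
      intro s
      exact ((ContinuousLinearMap.apply ℂ (Fin n → ℂ) v).restrictScalars
        ℝ).hasFDerivAt.comp_hasDerivAt s (ha s)
    have hL : ∀ s : ℝ, HasDerivAt (fun s : ℝ => Complex.exp (-μ * s) • φ s v)
        (Complex.exp (-μ * s) • φ s (N v)) s := by
      intro s
      refine ((hexp s).smul (hφv s)).congr_deriv ?_
      simp [hN, smul_sub, mul_smul, sub_eq_add_neg]
    have hR : ∀ s : ℝ, HasDerivAt (fun s : ℝ => ∑ j ∈ Finset.range (k + 1),
        ((s : ℂ) ^ j / (j.factorial : ℂ)) • (N ^ j) v)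
        (∑ j ∈ Finset.range k, ((s : ℂ) ^ j / (j.factorial : ℂ)) • (N ^ j) (N v)) s := by
      intro s
      have e : (fun s : ℝ => ∑ j ∈ Finset.range (k + 1),
        ((s : ℂ) ^ j / (j.factorial : ℂ)) • (N ^ j) v) = fun s : ℝ => (∑ j ∈ Finset.range k,
        ((s : ℂ) ^ (j + 1) / ((j + 1).factorial : ℂ)) • (N ^ (j + 1)) v) + v := by
        funext s; rw [Finset.sum_range_succ']; simp
      rw [e]
      refine HasDerivAt.add_const _ ?_
      refine HasDerivAt.fun_sum fun j _ => ?_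
      have e2 : (N ^ (j + 1)) v = (N ^ j) (N v) := by rw [pow_succ]; rfl
      rw [e2]
      refine HasDerivAt.smul_const ?_ _
      have h1 : HasDerivAt (fun z : ℂ => z ^ (j + 1) / ((j + 1).factorial : ℂ))
          ((s : ℂ) ^ j / (j.factorial : ℂ)) (s : ℂ) := by
        refine ((hasDerivAt_pow (j + 1) (s : ℂ)).div_const ((j + 1).factorial : ℂ)).congr_deriv ?_
        have : (j.factorial : ℂ) ≠ 0 := by exact_mod_cast j.factorial_ne_zero
        have h3 : ((j : ℂ) + 1) ≠ 0 := by exact_mod_cast j.succ_ne_zero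
        rw [Nat.factorial_succ]; push_cast
        field_simp
      exact h1.comp_ofReal
    have hD : ∀ s : ℝ, HasDerivAt (fun s : ℝ => Complex.exp (-μ * s) • φ s v -
        ∑ j ∈ Finset.range (k + 1), ((s : ℂ) ^ j / (j.factorial : ℂ)) • (N ^ j) v) 0 s := by
      intro s
      have := (hL s).sub (hR s)
      rw [ih (N v) hNv s, sub_self] at this
      exact this
    intro s
    have hc := is_const_of_deriv_eq_zero (fun s => (hD s).differentiableAt)
      (fun s => (hD s).deriv) s 0
    rw [← sub_eq_zero]
    refine hc.trans ?_
    rw [Finset.sum_range_succ']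
    simp [h0]

theorem oneParam_isExpPoly {d n : ℕ} (φ : ℝ → (Fin n → ℂ) →L[ℂ] (Fin n → ℂ)) (hφ : Continuous φ)
    (h0 : φ 0 = 1) (hadd : ∀ s t, φ (s + t) = φ s * φ t) (i : Fin d) (v : Fin n → ℂ) (l : Fin n) :
    IsExpPoly d (fun x => φ (x i) v l) := by
  obtain ⟨a, ha⟩ := oneParam_hasDerivAt φ hφ h0 hadd
  have hv : v ∈ ⨆ μ, Module.End.maxGenEigenspace (a : Module.End ℂ (Fin n → ℂ)) μ := by
    rw [Module.End.iSup_maxGenEigenspace_eq_top]; trivial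
  induction hv using Submodule.iSup_induction' with
  | mem μ v hv =>
    obtain ⟨k, hk⟩ := (Module.End.mem_maxGenEigenspace _ _ _).1 hv
    have h1 := oneParam_genEigen φ h0 a ha μ k v hk
    have h2 : ∀ x : Fin d → ℝ, φ (x i) v l = Complex.exp (μ * (x i : ℂ)) *
        ∑ j ∈ Finset.range k, (x i : ℂ) ^ j * (((j.factorial : ℂ))⁻¹ *
          ((((a : Module.End ℂ (Fin n → ℂ)) - μ • (1 : Module.End ℂ (Fin n → ℂ))) ^ j) v l)) := by
      intro x
      have h3 := congrFun (h1 (x i)) l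
      simp only [Finset.sum_apply, Pi.smul_apply, smul_eq_mul, div_eq_mul_inv, mul_assoc] at h3
      rw [← h3, ← mul_assoc, ← Complex.exp_add]
      simp
    simp only [h2]
    exact (IsExpPoly.exp' d i μ).mul' (IsExpPoly.sum' _ _ fun j _ =>
      ((IsExpPoly.coord d i).pow' j).mul' (IsExpPoly.const' d _))
  | zero => simpa using IsExpPoly.zero' d
  | add x y _ _ hx hy => simpa using hx.add' hy

theorem multiParam_isExpPoly {d n : ℕ} (T : (Fin d → ℝ) → (Fin n → ℂ) →L[ℂ] (Fin n → ℂ))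
    (hT : Continuous T) (h0 : T 0 = 1) (hadd : ∀ s t, T (s + t) = T s * T t)
    (v : Fin n → ℂ) (l : Fin n) : IsExpPoly d (fun x => T x v l) := by
  have key : ∀ s : Finset (Fin d), ∀ l, 
      IsExpPoly d (fun x => T (∑ i ∈ s, Pi.single i (x i)) v l) := by
    intro s
    induction s using Finset.induction_on with
    | empty => intro l; simpa [h0] using IsExpPoly.const' d (v l)
    | insert i s hi ih =>
      intro l
      have e : ∀ x : Fin d → ℝ, T (∑ i ∈ insert i s, Pi.single i (x i)) v l =
          ∑ j, T (∑ i ∈ s, Pi.single i (x i)) v j *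
            T (Pi.single i (x i)) (Pi.single j 1) l := by
        intro x
        rw [Finset.sum_insert hi, hadd, mul_apply_eq_comp]
        set w := T (∑ i ∈ s, Pi.single i (x i)) v
        conv_lhs => rw [pi_eq_sum_univ' w]
        simp [Finset.sum_apply]
      simp only [e]
      refine IsExpPoly.sum' _ _ fun j _ => (ih j).mul' ?_
      refine oneParam_isExpPoly (fun s => T (Pi.single i s)) ?_ ?_ ?_ i _ l
      · exact hT.comp (continuous_single (A := fun _ : Fin d => ℝ) i)
      · simp [h0]
      · intro s t; simp only [Pi.single_add, hadd]
  simpa [Finset.univ_sum_single] using key Finset.univ l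

theorem isExpPoly_of_invariant {d : ℕ} (Z : Submodule ℂ ((Fin d → ℝ) → ℂ))
    (hf : FiniteDimensional ℂ Z) (hc : ∀ g ∈ Z, Continuous g)
    (hZ : ∀ y, ∀ g ∈ Z, transL d y g ∈ Z) (g : (Fin d → ℝ) → ℂ) (hg : g ∈ Z) : IsExpPoly d g := by
  let b := Module.finBasis ℂ Z
  let n := Module.finrank ℂ Z
  let e : Z ≃L[ℂ] (Fin n → ℂ) := b.equivFunL
  let R : (Fin d → ℝ) → Module.End ℂ Z := fun y => (transL d y).restrict (hZ y)
  let T : (Fin d → ℝ) → (Fin n → ℂ) →L[ℂ] (Fin n → ℂ) := fun y =>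
    LinearMap.toContinuousLinearMap (e.toLinearMap ∘ₗ R y ∘ₗ e.symm.toLinearMap)
  have hTapp : ∀ y v, T y v = e (R y (e.symm v)) := fun y v => rfl
  have hT : Continuous T := by
    rw [continuous_clm_apply]
    intro v
    simp only [hTapp]
    refine e.continuous.comp ?_
    refine Continuous.subtype_mk (f := fun y => transL d y (e.symm v)) ?_ _
    refine continuous_pi fun x => ?_
    exact (hc _ (e.symm v).2).comp (continuous_const.add continuous_id)
  have h0 : T 0 = 1 := by
    ext1 v
    have : R 0 (e.symm v) = e.symm v := Subtype.ext (by simp [R, transL_zero])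
    rw [hTapp, this]; simp
  have hadd : ∀ s t, T (s + t) = T s * T t := by
    intro s t
    ext1 v
    have : R (s + t) (e.symm v) = R s (R t (e.symm v)) :=
      Subtype.ext (by simp [R, transL_add])
    rw [mul_apply_eq_comp, hTapp, hTapp, hTapp, this]; simp
  have hfin : ∀ x, g x = ∑ l, T x (e ⟨g, hg⟩) l * (b l : (Fin d → ℝ) → ℂ) 0 := by
    intro x
    have h1 : T x (e ⟨g, hg⟩) = b.equivFun (R x ⟨g, hg⟩) := by rw [hTapp]; simp; rfl
    have h2 := b.sum_equivFun (R x ⟨g, hg⟩)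
    have h3 := congrArg (fun z : Z => (z : (Fin d → ℝ) → ℂ) 0) h2
    simp only [Submodule.coe_sum, Finset.sum_apply, Submodule.coe_smul, Pi.smul_apply,
      smul_eq_mul] at h3
    rw [h1, h3]
    simp [R, transL]
  have : g = fun x => ∑ l, T x (e ⟨g, hg⟩) l * (b l : (Fin d → ℝ) → ℂ) 0 := funext hfin
  rw [this]
  exact IsExpPoly.sum' _ _ fun l _ =>
    (multiParam_isExpPoly T hT h0 hadd _ l).mul' (IsExpPoly.const' d _)

theorem stmt3 (d t : ℕ) (hd : 0 < d) (ht : 0 < t) (h : Fin t → Fin d → ℝ)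
    (hdense : Dense ((AddSubgroup.closure (Set.range h) :
      AddSubgroup (Fin d → ℝ)) : Set (Fin d → ℝ)))
    (W H : Submodule ℂ ((Fin d → ℝ) → ℂ))
    (hWc : ∀ g ∈ W, Continuous g) (hHc : ∀ g ∈ H, Continuous g)
    (hWfd : FiniteDimensional ℂ W) (hHfd : FiniteDimensional ℂ H)
    (m : Fin t → ℕ) (hm : ∀ k, 0 < m k)
    (hWH : ∀ k, ∀ g ∈ W, (fd (h k))^[m k] g ∈ H)
    (hHH : ∀ k, ∀ g ∈ H, (fd (h k))^[m k] g ∈ H) :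
    (∃ Z : Submodule ℂ ((Fin d → ℝ) → ℂ), FiniteDimensional ℂ Z ∧
      (∀ g ∈ Z, Continuous g) ∧
      (∀ y : Fin d → ℝ, ∀ g ∈ Z, (fun x => g (x + y)) ∈ Z) ∧
      W ≤ Z ∧ H ≤ Z) ∧
    (∀ g, g ∈ W ∨ g ∈ H → IsExpPoly d g) := by
  
  let C : Submodule ℂ ((Fin d → ℝ) → ℂ) :=
    { carrier := {g | Continuous g}
      add_mem' := fun ha hb => Continuous.add ha hb
      zero_mem' := continuous_zero
      smul_mem' := fun c _ hg => Continuous.const_smul hg c }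
  let L : Fin t → Module.End ℂ ((Fin d → ℝ) → ℂ) := fun k => transL d (h k) - 1
  have hLfd : ∀ k f, L k f = fd (h k) f := fun k f => rfl
  have hLpow : ∀ k n f, (L k ^ n) f = (fd (h k))^[n] f := by
    intro k n f
    rw [Module.End.pow_apply]; rfl
  have hLcomm : ∀ i j, Commute (L i) (L j) := fun i j =>
    ((transL_commute d (h i) (h j)).sub_right (Commute.one_right _)).sub_left (Commute.one_left _)
  have hVH : ∀ k, ∀ g ∈ W ⊔ H, (L k ^ m k) g ∈ W ⊔ H := by
    intro k g hg
    obtain ⟨w, hw, u, hu, rfl⟩ := Submodule.mem_sup.1 hg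
    refine Submodule.mem_sup_right ?_
    rw [map_add, hLpow, hLpow]
    exact add_mem (hWH k w hw) (hHH k u hu)
  have hCL : ∀ k, ∀ g ∈ C, L k g ∈ C := by
    intro k g hg
    have hg' : Continuous g := hg
    have : Continuous (fun x => g (x + h k) - g x) := by fun_prop
    exact this
  obtain ⟨Z, hZf, hVZ, hZC, hZL, -⟩ := exists_invariant_aux L hLcomm m C (W ⊔ H)
    (sup_le hWc hHc) hCL inferInstance hm hVH Finset.univ
  have hZc : ∀ g ∈ Z, Continuous g := fun g hg => hZC hg
  have hinv := transL_invariant d t h hdense Z hZf hZc (by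
    intro k g hg
    have h1 := add_mem (hZL k (Finset.mem_univ k) g hg) hg
    have h2 : L k g + g = transL d (h k) g := by simp [L]
    rwa [h2] at h1)
  have hWZ : W ≤ Z := le_sup_left.trans hVZ
  have hHZ : H ≤ Z := le_sup_right.trans hVZ
  refine ⟨⟨Z, hZf, hZc, hinv, hWZ, hHZ⟩, ?_⟩
  rintro g (hg | hg)
  · exact isExpPoly_of_invariant Z hZf hZc hinv g (hWZ hg)
  · exact isExpPoly_of_invariant Z hZf hZc hinv g (hHZ hg)
end

section
/- Let d and t be positive integers and let h_1, …, h_t ∈ ℝ^d be such that the additive subgroup h_1ℤ + h_2ℤ + ⋯ + h_tℤ is dense in ℝ^d. Let f : ℝ^d → ℂ be continuous and suppose there exist natural numbers m_1, …, m_t such that for every k = 1, …, t the function Δ_{h_k}^{m_k} f is a continuous exponential polynomial. Then f is a continuous exponential polynomial. -/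
namespace Stmt4Aux

/-! ### Closure properties of exponential polynomials -/

lemma isExpPoly_of_fintype {d : ℕ} {ι : Type*} [Fintype ι] (f : (Fin d → ℝ) → ℂ)
    (p : ι → MvPolynomial (Fin d) ℂ) (lam : ι → Fin d → ℂ)
    (hf : ∀ x, f x = ∑ j, (MvPolynomial.eval (fun i => (x i : ℂ)) (p j)) *
      Complex.exp (∑ i, lam j i * (x i : ℂ))) : IsExpPoly d f := by
  let e := Fintype.equivFin ι
  refine ⟨Fintype.card ι, fun j => p (e.symm j), fun j => lam (e.symm j), fun x => ?_⟩
  rw [hf x]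
  exact (Equiv.sum_comp e.symm (fun j => (MvPolynomial.eval (fun i => (x i : ℂ)) (p j)) *
      Complex.exp (∑ i, lam j i * (x i : ℂ)))).symm

lemma _root_.IsExpPoly.add'_s4 {d : ℕ} {f g : (Fin d → ℝ) → ℂ} (hf : IsExpPoly d f)
    (hg : IsExpPoly d g) : IsExpPoly d (fun x => f x + g x) := by
  obtain ⟨n, p, l, h⟩ := hf
  obtain ⟨n', p', l', h'⟩ := hg
  refine isExpPoly_of_fintype (ι := Fin n ⊕ Fin n') _ (Sum.elim p p') (Sum.elim l l') fun x => ?_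
  simp [h, h']

lemma _root_.IsExpPoly.mul'_s4 {d : ℕ} {f g : (Fin d → ℝ) → ℂ} (hf : IsExpPoly d f)
    (hg : IsExpPoly d g) : IsExpPoly d (fun x => f x * g x) := by
  obtain ⟨n, p, l, h⟩ := hf
  obtain ⟨n', p', l', h'⟩ := hg
  refine isExpPoly_of_fintype (ι := Fin n × Fin n') _ (fun a => p a.1 * p' a.2)
    (fun a => l a.1 + l' a.2) fun x => ?_
  simp only [h, h', Finset.sum_mul_sum, Fintype.sum_prod_type, map_mul, Pi.add_apply, add_mul,
    Finset.sum_add_distrib, Complex.exp_add]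
  refine Finset.sum_congr rfl fun i _ => Finset.sum_congr rfl fun j _ => ?_
  ring

lemma isExpPoly_const {d : ℕ} (c : ℂ) : IsExpPoly d (fun _ => c) :=
  ⟨1, fun _ => MvPolynomial.C c, fun _ => 0, fun x => by simp⟩

lemma isExpPoly_sum {d : ℕ} {ι : Type*} (s : Finset ι) (F : ι → (Fin d → ℝ) → ℂ)
    (hF : ∀ i ∈ s, IsExpPoly d (F i)) : IsExpPoly d (fun x => ∑ i ∈ s, F i x) := by
  classical
  induction s using Finset.induction_on with
  | empty => simpa using isExpPoly_const (d := d) 0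
  | insert a s ha ih =>
    simp only [Finset.sum_insert ha]
    exact (hF a (by simp)).add'_s4 (ih fun i hi => hF i (by simp [hi]))

/-! ### One-variable exponential polynomials -/

/-- One-variable exponential polynomials. -/
def E1 : Submodule ℂ (ℝ → ℂ) :=
  Submodule.span ℂ (Set.range fun a : ℕ × ℂ => fun s : ℝ => (s : ℂ) ^ a.1 * Complex.exp (a.2 * s))

lemma isExpPoly_of_E1 {d : ℕ} (i : Fin d) {g : ℝ → ℂ} (hg : g ∈ E1) :
    IsExpPoly d (fun x => g (x i)) := by
  unfold E1 at hg
  induction hg using Submodule.span_induction with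
  | mem g h =>
    obtain ⟨⟨k, l⟩, rfl⟩ := h
    refine ⟨1, fun _ => MvPolynomial.X i ^ k, fun _ => Pi.single i l, fun x => ?_⟩
    simp [Pi.single_apply]
  | zero => exact isExpPoly_const 0
  | add f g _ _ hf hg => exact hf.add'_s4 hg
  | smul c f _ hf => exact (isExpPoly_const c).mul'_s4 hf

lemma poly_exp_mem_E1 (l : ℂ) (p : Polynomial ℂ) :
    (fun s : ℝ => Complex.exp (l * s) * p.eval (s : ℂ)) ∈ E1 := by
  have : (fun s : ℝ => Complex.exp (l * s) * p.eval (s : ℂ)) =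
      ∑ k ∈ Finset.range (p.natDegree + 1), p.coeff k •
        (fun s : ℝ => (s : ℂ) ^ k * Complex.exp (l * s)) := by
    funext s
    simp only [Polynomial.eval_eq_sum_range, Finset.sum_apply, Pi.smul_apply, smul_eq_mul,
      Finset.mul_sum]
    refine Finset.sum_congr rfl fun k _ => by ring
  rw [this]
  exact Submodule.sum_mem _ fun k _ => Submodule.smul_mem _ _ (Submodule.subset_span ⟨(k, l), rfl⟩)

lemma exists_antideriv (p : Polynomial ℂ) : ∃ q : Polynomial ℂ, Polynomial.derivative q = p := by
  induction p using Polynomial.induction_on' with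
  | add p q hp hq =>
    obtain ⟨a, rfl⟩ := hp
    obtain ⟨b, rfl⟩ := hq
    exact ⟨a + b, by simp⟩
  | monomial n a =>
    refine ⟨Polynomial.monomial (n + 1) (a / (n + 1)), ?_⟩
    rw [Polynomial.derivative_monomial]
    have : (n : ℂ) + 1 ≠ 0 := Nat.cast_add_one_ne_zero n
    simp [this]

lemma poly_of_deriv (u : ℝ → ℂ) (p : Polynomial ℂ)
    (hu : ∀ s : ℝ, HasDerivAt u (p.eval (s : ℂ)) s) :
    ∃ q : Polynomial ℂ, ∀ s : ℝ, u s = q.eval (s : ℂ) := by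
  obtain ⟨q, rfl⟩ := exists_antideriv p
  have hd : ∀ s : ℝ, HasDerivAt (fun s : ℝ => u s - q.eval (s : ℂ)) 0 s := fun s => by
    have := (hu s).fun_sub ((q.hasDerivAt (s : ℂ)).comp_ofReal)
    rwa [sub_self] at this
  refine ⟨q + Polynomial.C (u 0 - q.eval 0), fun s => ?_⟩
  have := is_const_of_deriv_eq_zero (f := fun s : ℝ => u s - q.eval (s : ℂ))
    (fun s => (hd s).differentiableAt) (fun s => (hd s).deriv) s 0
  simp at this
  simp [← this]

/-- Continuous one-parameter semigroups are differentiable. -/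
lemma one_param_deriv {R : Type*} [NormedRing R] [NormedAlgebra ℝ R] [CompleteSpace R]
    (A : ℝ → R) (hA : Continuous A) (h0 : A 0 = 1) (hadd : ∀ s t, A (s + t) = A s * A t) :
    ∃ B : R, ∀ s, HasDerivAt A (A s * B) s := by
  let F : ℝ → R := fun x => ∫ r in (0:ℝ)..x, A r
  have hF : ∀ x, HasDerivAt F (A x) x := fun x =>
    intervalIntegral.integral_hasDerivAt_right (hA.intervalIntegrable _ _)
      (hA.stronglyMeasurableAtFilter _ _) hA.continuousAt
  have hF0 : F 0 = 0 := by simp [F]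
  -- small ε with F ε invertible
  have hunit : ∃ ε : ℝ, IsUnit (F ε) := by
    have h1 := (hF 0).tendsto_slope_zero
    simp only [zero_add, hF0, sub_zero, h0] at h1
    have h2 : ∀ᶠ t in nhdsWithin (0:ℝ) {0}ᶜ, IsUnit (t⁻¹ • F t) :=
      h1 (Units.isOpen.mem_nhds isUnit_one)
    obtain ⟨t, ht, ht0⟩ := (h2.and self_mem_nhdsWithin).exists
    refine ⟨t, ?_⟩
    have ht0' : t ≠ 0 := ht0
    have h3 := (isUnit_iff_ne_zero.2 ht0').map (algebraMap ℝ R)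
    have h4 := h3.mul ht
    rwa [← Algebra.smul_def, smul_smul, mul_inv_cancel₀ ht0', one_smul] at h4
  obtain ⟨ε, M, hM⟩ := hunit
  have key : ∀ s, A s * F ε = F (s + ε) - F s := fun s => by
    simp only [F]
    rw [intervalIntegral.integral_interval_sub_left (hA.intervalIntegrable _ _)
      (hA.intervalIntegrable _ _)]
    have hcm : A s * ∫ r in (0:ℝ)..ε, A r = ∫ r in (0:ℝ)..ε, A s * A r :=
      ((ContinuousLinearMap.mul ℝ R (A s)).intervalIntegral_comp_comm
        (hA.intervalIntegrable _ _)).symm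
    rw [hcm]
    simp only [← hadd]
    rw [intervalIntegral.integral_comp_add_left (fun x => A x)]
    simp
  have hAs : A = fun s => (F (s + ε) - F s) * (↑M⁻¹ : R) := by
    funext s
    rw [← key, ← hM]; simp
  refine ⟨(A ε - 1) * (↑M⁻¹ : R), fun s => ?_⟩
  have hd : HasDerivAt (fun s => (F (s + ε) - F s) * (↑M⁻¹ : R)) ((A (s + ε) - A s) * (↑M⁻¹ : R)) s :=
    (((hF (s + ε)).comp_add_const s ε).sub (hF s)).mul_const _
  rw [← hAs] at hd
  convert hd using 1
  rw [hadd, ← mul_assoc, mul_sub, mul_one]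

lemma one_param_E1 {W : Type*} [NormedAddCommGroup W] [NormedSpace ℂ W] [FiniteDimensional ℂ W]
    (A : ℝ → (W →L[ℂ] W)) (hA : Continuous A) (h0 : A 0 = 1)
    (hadd : ∀ s t, A (s + t) = A s * A t) (φ : W →L[ℂ] ℂ) (v : W) :
    (fun s => φ (A s v)) ∈ E1 := by
  have : CompleteSpace W := FiniteDimensional.complete ℂ W
  obtain ⟨B, hB⟩ := one_param_deriv A hA h0 hadd
  have hder : ∀ (v : W) (s : ℝ), HasDerivAt (fun s => φ (A s v)) (φ (A s (B v))) s := by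
    intro v s
    let Φ : (W →L[ℂ] W) →L[ℂ] ℂ := φ.comp (ContinuousLinearMap.apply ℂ W v)
    exact ((Φ.restrictScalars ℝ).hasFDerivAt.comp_hasDerivAt s (hB s))
  have hpoly : ∀ (l : ℂ) (N : ℕ) (v : W), (((B : W →ₗ[ℂ] W) - l • 1) ^ N) v = 0 →
      ∃ q : Polynomial ℂ, ∀ s : ℝ, Complex.exp (-l * s) * φ (A s v) = q.eval (s : ℂ) := by
    intro l N
    induction N with
    | zero => intro v hv; exact ⟨0, fun s => by simp at hv; simp [hv]⟩
    | succ N ih =>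
      intro v hv
      rw [pow_succ, Module.End.mul_apply] at hv
      obtain ⟨p, hp⟩ := ih _ hv
      refine poly_of_deriv _ p fun s => ?_
      have he : HasDerivAt (fun s : ℝ => Complex.exp (-l * s)) (Complex.exp (-l * s) * -l) s := by
        have h1 : HasDerivAt (fun z : ℂ => Complex.exp (-l * z)) (Complex.exp (-l * s) * -l) (s:ℂ) := by
          simpa using ((hasDerivAt_id (s:ℂ)).const_mul (-l)).cexp
        exact h1.comp_ofReal
      have hval : p.eval (s : ℂ) = Complex.exp (-l * s) * -l * φ (A s v) +
          Complex.exp (-l * s) * φ (A s (B v)) := by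
        rw [← hp]
        simp
        ring
      rw [hval]
      exact he.mul (hder v s)
  have htop := Module.End.iSup_maxGenEigenspace_eq_top (B : W →ₗ[ℂ] W)
  have hv : v ∈ ⨆ l, Module.End.maxGenEigenspace (B : W →ₗ[ℂ] W) l := by rw [htop]; trivial
  induction hv using Submodule.iSup_induction' with
  | mem l v hv =>
    rw [Module.End.mem_maxGenEigenspace] at hv
    obtain ⟨N, hN⟩ := hv
    obtain ⟨q, hq⟩ := hpoly l N v hN
    convert poly_exp_mem_E1 l q using 2 with s
    rw [← hq, ← mul_assoc, ← Complex.exp_add]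
    simp
  | zero => simp only [map_zero]; exact E1.zero_mem
  | add v w _ _ h1 h2 => simp only [map_add]; exact E1.add_mem h1 h2

/-! ### Translation operators -/

/-- Translation. -/
def tr {d : ℕ} (h : Fin d → ℝ) : ((Fin d → ℝ) → ℂ) →ₐ[ℂ] ((Fin d → ℝ) → ℂ) where
  toFun f := fun x => f (x + h)
  map_one' := rfl
  map_mul' _ _ := rfl
  map_zero' := rfl
  map_add' _ _ := rfl
  commutes' _ := rfl

lemma tr_apply {d : ℕ} (h : Fin d → ℝ) (f : (Fin d → ℝ) → ℂ) (x) : tr h f x = f (x + h) := rfl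

/-- Finite-dimensional translation invariant spaces of continuous functions. -/
theorem isExpPoly_of_invariant {d : ℕ} (V : Submodule ℂ ((Fin d → ℝ) → ℂ)) (hfg : V.FG)
    (hc : ∀ v ∈ V, Continuous v) (hinv : ∀ h, ∀ v ∈ V, tr h v ∈ V)
    (f) (hf : f ∈ V) : IsExpPoly d f := by
  classical
  have : FiniteDimensional ℂ V := Module.Finite.of_fg hfg
  let n := Module.finrank ℂ V
  let b : Module.Basis (Fin n) ℂ V := Module.finBasis ℂ V
  let T : (Fin d → ℝ) → (V →ₗ[ℂ] V) := fun y =>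
    (tr y).toLinearMap.restrict (hinv y)
  have hT : ∀ y (v : V) x, (T y v : (Fin d → ℝ) → ℂ) x = (v : (Fin d → ℝ) → ℂ) (x + y) :=
    fun y v x => rfl
  let ev : (Fin d → ℝ) → Module.Dual ℂ V := fun x => (LinearMap.proj x).comp V.subtype
  have hspan : Submodule.span ℂ (Set.range ev) = ⊤ := by
    rw [← Subspace.dualCoannihilator_dualAnnihilator_eq (W := Submodule.span ℂ (Set.range ev))]
    have : (Submodule.span ℂ (Set.range ev)).dualCoannihilator = ⊥ := by
      rw [eq_bot_iff]
      intro v hv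
      rw [Submodule.mem_dualCoannihilator] at hv
      rw [Submodule.mem_bot]
      ext x
      exact hv (ev x) (Submodule.subset_span ⟨x, rfl⟩)
    rw [this]; simp
  have hcont : ∀ (φ : Module.Dual ℂ V) (v : V), Continuous fun y => φ (T y v) := by
    intro φ v
    have hφ : φ ∈ Submodule.span ℂ (Set.range ev) := by rw [hspan]; trivial
    induction hφ using Submodule.span_induction with
    | mem g h =>
      obtain ⟨x, rfl⟩ := h
      exact (hc v v.2).comp (continuous_const.add continuous_id)
    | zero => exact continuous_const
    | add f g _ _ hf hg => exact hf.add hg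
    | smul c f _ hf => exact continuous_const.mul hf
  let W := Fin n → ℂ
  let A : (Fin d → ℝ) → (W →L[ℂ] W) := fun y => LinearMap.toContinuousLinearMap
    ((b.equivFun : V →ₗ[ℂ] W) ∘ₗ T y ∘ₗ (b.equivFun.symm : W →ₗ[ℂ] V))
  have hAapp : ∀ y w, A y w = b.equivFun (T y (b.equivFun.symm w)) := fun y w => rfl
  have hAc : Continuous A := by
    rw [continuous_clm_apply]
    intro w
    rw [continuous_pi_iff]
    intro i
    exact hcont (b.coord i) (b.equivFun.symm w)
  have hA0 : A 0 = 1 := by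
    ext1 w
    have : T 0 (b.equivFun.symm w) = b.equivFun.symm w := by
      ext x; rw [hT, add_zero]
    rw [hAapp, this, LinearEquiv.apply_symm_apply]; rfl
  have hAadd : ∀ y z, A (y + z) = A y * A z := by
    intro y z
    ext1 w
    rw [mul_apply_eq_comp, hAapp, hAapp, hAapp, LinearEquiv.symm_apply_apply]
    congr 1
    ext x
    rw [hT, hT, hT, add_assoc]
  have hE : ∀ (i : Fin d) (φ : W →L[ℂ] ℂ) (w : W),
      IsExpPoly d fun x => φ (A (Pi.single i (x i)) w) := by
    intro i φ w
    refine isExpPoly_of_E1 i (g := fun s => φ (A (Pi.single i s) w)) ?_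
    refine one_param_E1 (fun s => A (Pi.single i s)) ?_ ?_ ?_ φ w
    · exact hAc.comp (continuous_single (A := fun _ : Fin d => ℝ) i)
    · simpa using hA0
    · intro s t; rw [← hAadd, Pi.single_add]
  have hS : ∀ (s : Finset (Fin d)) (φ : W →L[ℂ] ℂ) (w : W),
      IsExpPoly d fun x => φ (A (∑ i ∈ s, Pi.single i (x i)) w) := by
    intro s
    induction s using Finset.induction_on with
    | empty => intro φ w; simpa using isExpPoly_const _
    | insert a s ha ih =>
      intro φ w
      have : ∀ x : Fin d → ℝ, φ (A (∑ i ∈ insert a s, Pi.single i (x i)) w) =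
          ∑ j : Fin n, (A (∑ i ∈ s, Pi.single i (x i)) w) j *
            φ (A (Pi.single a (x a)) (Pi.single j 1)) := by
        intro x
        rw [Finset.sum_insert ha, hAadd, mul_apply_eq_comp]
        set u := A (∑ i ∈ s, Pi.single i (x i)) w
        conv_lhs => rw [pi_eq_sum_univ' u]
        simp only [map_sum, map_smul, smul_eq_mul]
      simp only [this]
      exact isExpPoly_sum _ _ fun j _ =>
        (ih (ContinuousLinearMap.proj j) w).mul'_s4 (hE a φ (Pi.single j 1))
  let φ : W →L[ℂ] ℂ := LinearMap.toContinuousLinearMap (ev 0 ∘ₗ (b.equivFun.symm : W →ₗ[ℂ] V))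
  have := hS Finset.univ φ (b.equivFun ⟨f, hf⟩)
  convert this using 2 with x
  rw [Finset.univ_sum_single]
  change f x = ev 0 (b.equivFun.symm (A x (b.equivFun ⟨f, hf⟩)))
  rw [hAapp, LinearEquiv.symm_apply_apply, LinearEquiv.symm_apply_apply]
  change f x = f (0 + x)
  rw [zero_add]

/-- `f` lies in a finite-dimensional translation invariant space of continuous functions. -/
def Good {d : ℕ} (f : (Fin d → ℝ) → ℂ) : Prop :=
  ∃ V : Submodule ℂ ((Fin d → ℝ) → ℂ), V.FG ∧ (∀ v ∈ V, Continuous v) ∧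
    (∀ h, ∀ v ∈ V, tr h v ∈ V) ∧ f ∈ V

lemma Good.add {d : ℕ} {f g : (Fin d → ℝ) → ℂ} (hf : Good f) (hg : Good g) : Good (f + g) := by
  obtain ⟨V, h1, h2, h3, h4⟩ := hf
  obtain ⟨W, k1, k2, k3, k4⟩ := hg
  refine ⟨V ⊔ W, h1.sup k1, ?_, ?_, Submodule.add_mem_sup h4 k4⟩
  · intro v hv
    obtain ⟨a, ha, b, hb, rfl⟩ := Submodule.mem_sup.1 hv
    exact (h2 a ha).add (k2 b hb)
  · intro h v hv
    obtain ⟨a, ha, b, hb, rfl⟩ := Submodule.mem_sup.1 hv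
    rw [map_add]
    exact Submodule.add_mem_sup (h3 h a ha) (k3 h b hb)

lemma Good.mul {d : ℕ} {f g : (Fin d → ℝ) → ℂ} (hf : Good f) (hg : Good g) : Good (f * g) := by
  obtain ⟨V, h1, h2, h3, h4⟩ := hf
  obtain ⟨W, k1, k2, k3, k4⟩ := hg
  refine ⟨V * W, h1.mul k1, ?_, ?_, Submodule.mul_mem_mul h4 k4⟩
  · intro v hv
    induction hv using Submodule.mul_induction_on' with
    | mem_mul_mem a ha b hb => exact (h2 a ha).mul (k2 b hb)
    | add a _ b _ ha hb => exact ha.add hb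
  · intro h v hv
    induction hv using Submodule.mul_induction_on' with
    | mem_mul_mem a ha b hb =>
      rw [map_mul]
      exact Submodule.mul_mem_mul (h3 h a ha) (k3 h b hb)
    | add a _ b _ ha hb => rw [map_add]; exact Submodule.add_mem _ ha hb

lemma good_const {d : ℕ} (c : ℂ) : Good (fun _ : Fin d → ℝ => c) := by
  refine ⟨Submodule.span ℂ {1}, Submodule.fg_span (by simp), ?_, ?_, ?_⟩
  · intro v hv
    obtain ⟨a, rfl⟩ := Submodule.mem_span_singleton.1 hv
    exact (continuous_const : Continuous (fun _ : Fin d → ℝ => a * 1))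
  · intro h v hv
    obtain ⟨a, rfl⟩ := Submodule.mem_span_singleton.1 hv
    exact Submodule.mem_span_singleton.2 ⟨a, by simp⟩
  · exact Submodule.mem_span_singleton.2 ⟨c, by ext; simp⟩

lemma good_coord {d : ℕ} (i : Fin d) : Good (fun x : Fin d → ℝ => (x i : ℂ)) := by
  refine ⟨Submodule.span ℂ {1, fun x : Fin d → ℝ => (x i : ℂ)}, Submodule.fg_span (by simp),
    ?_, ?_, Submodule.subset_span (by simp)⟩
  · intro v hv
    obtain ⟨a, b, rfl⟩ := Submodule.mem_span_pair.1 hv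
    have h1 : Continuous (fun x : Fin d → ℝ => a * 1 + b * (x i : ℂ)) := by fun_prop
    exact h1
  · intro h v hv
    obtain ⟨a, b, rfl⟩ := Submodule.mem_span_pair.1 hv
    refine Submodule.mem_span_pair.2 ⟨a + b * h i, b, ?_⟩
    ext x
    simp [tr_apply]
    ring

lemma good_exp {d : ℕ} (l : Fin d → ℂ) :
    Good (fun x : Fin d → ℝ => Complex.exp (∑ i, l i * (x i : ℂ))) := by
  refine ⟨Submodule.span ℂ {fun x : Fin d → ℝ => Complex.exp (∑ i, l i * (x i : ℂ))},
    Submodule.fg_span (by simp), ?_, ?_, Submodule.subset_span (by simp)⟩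
  · intro v hv
    obtain ⟨a, rfl⟩ := Submodule.mem_span_singleton.1 hv
    refine (continuous_const (y := a)).mul ?_
    fun_prop
  · intro h v hv
    obtain ⟨a, rfl⟩ := Submodule.mem_span_singleton.1 hv
    refine Submodule.mem_span_singleton.2 ⟨a * Complex.exp (∑ i, l i * (h i : ℂ)), ?_⟩
    ext x
    simp [tr_apply, mul_add, Finset.sum_add_distrib, Complex.exp_add]
    ring

lemma good_poly {d : ℕ} (p : MvPolynomial (Fin d) ℂ) :
    Good (fun x : Fin d → ℝ => MvPolynomial.eval (fun i => (x i : ℂ)) p) := by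
  induction p using MvPolynomial.induction_on with
  | C a => simpa using good_const a
  | add p q hp hq => simp only [map_add]; exact hp.add hq
  | mul_X p i hp =>
    simp only [map_mul, MvPolynomial.eval_X]
    exact hp.mul (good_coord i)

lemma good_of_isExpPoly {d : ℕ} {f : (Fin d → ℝ) → ℂ} (hf : IsExpPoly d f) : Good f := by
  obtain ⟨n, p, l, h⟩ := hf
  have : f = ∑ j, (fun x : Fin d → ℝ => MvPolynomial.eval (fun i => (x i : ℂ)) (p j)) *
      (fun x : Fin d → ℝ => Complex.exp (∑ i, l j i * (x i : ℂ))) := by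
    funext x; rw [h x]; simp
  rw [this]
  have key : ∀ s : Finset (Fin n), Good (∑ j ∈ s,
      (fun x : Fin d → ℝ => MvPolynomial.eval (fun i => (x i : ℂ)) (p j)) *
      (fun x : Fin d → ℝ => Complex.exp (∑ i, l j i * (x i : ℂ)))) := by
    intro s
    classical
    induction s using Finset.induction_on with
    | empty => exact good_const 0
    | insert a s ha ih =>
      rw [Finset.sum_insert ha]
      exact ((good_poly _).mul (good_exp _)).add ih
  exact key _

/-- Abstract finiteness lemma: commuting operators, nilpotent on `f` modulo `U`. -/
lemma exists_invariant {M ι : Type*} [AddCommGroup M] [Module ℂ M]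
    (T : ι → Module.End ℂ M) (hcomm : ∀ i j, Commute (T i) (T j)) (m : ι → ℕ)
    (U C : Submodule ℂ M) (hUfg : U.FG) (hU : ∀ i, ∀ u ∈ U, T i u ∈ U)
    (hUC : U ≤ C) (hC : ∀ i, ∀ u ∈ C, T i u ∈ C)
    (f : M) (hfC : f ∈ C) (hf : ∀ i, (T i ^ m i) f ∈ U) (s : Finset ι) :
    ∃ V : Submodule ℂ M, V.FG ∧ V ≤ C ∧ U ≤ V ∧ f ∈ V ∧ (∀ i ∈ s, ∀ v ∈ V, T i v ∈ V) ∧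
      ∀ i, ∀ v ∈ V, (T i ^ m i) v ∈ U := by
  classical
  have hUp : ∀ i (k : ℕ), ∀ u ∈ U, (T i ^ k) u ∈ U := by
    intro i k
    induction k with
    | zero => intro u hu; simpa using hu
    | succ k ih => intro u hu; rw [pow_succ, Module.End.mul_apply]; exact ih _ (hU i u hu)
  have hCp : ∀ i (k : ℕ), ∀ u ∈ C, (T i ^ k) u ∈ C := by
    intro i k
    induction k with
    | zero => intro u hu; simpa using hu
    | succ k ih => intro u hu; rw [pow_succ, Module.End.mul_apply]; exact ih _ (hC i u hu)
  induction s using Finset.induction_on with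
  | empty =>
    refine ⟨U ⊔ Submodule.span ℂ {f}, hUfg.sup (Submodule.fg_span (by simp)), ?_, le_sup_left,
      ?_, by simp, ?_⟩
    · refine sup_le hUC ?_
      rw [Submodule.span_le]; simpa using hfC
    · exact Submodule.mem_sup_right (Submodule.mem_span_singleton_self f)
    · intro i v hv
      obtain ⟨a, ha, b, hb, rfl⟩ := Submodule.mem_sup.1 hv
      obtain ⟨c, rfl⟩ := Submodule.mem_span_singleton.1 hb
      rw [map_add, map_smul]
      exact U.add_mem (hUp i _ a ha) (U.smul_mem _ (hf i))
  | insert a s ha ih =>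
    obtain ⟨V, h1, h2, h3, h4, h5, h6⟩ := ih
    have hle : ∀ j ∈ Finset.range (m a + 1), V.map (T a ^ j) ≤
        ⨆ j ∈ Finset.range (m a + 1), V.map (T a ^ j) := fun j hj =>
      le_iSup₂_of_le (f := fun j (_ : j ∈ Finset.range (m a + 1)) => V.map (T a ^ j)) j hj le_rfl
    have hV : V ≤ ⨆ j ∈ Finset.range (m a + 1), V.map (T a ^ j) := by
      intro v hv
      exact hle 0 (by simp) ⟨v, hv, by simp⟩
    -- a predicate induction principle
    have ind : ∀ (S : Submodule ℂ M) (L : Module.End ℂ M),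
        (∀ j ≤ m a, ∀ v ∈ V, L ((T a ^ j) v) ∈ S) →
        ∀ v ∈ ⨆ j ∈ Finset.range (m a + 1), V.map (T a ^ j), L v ∈ S := by
      intro S L h v hv
      have : (⨆ j ∈ Finset.range (m a + 1), V.map (T a ^ j)) ≤ S.comap L := by
        refine iSup₂_le fun j hj => ?_
        rintro _ ⟨v, hv, rfl⟩
        exact h j (by simp at hj; omega) v hv
      exact this hv
    have hcp : ∀ i j k l v, (T i ^ k) ((T j ^ l) v) = (T j ^ l) ((T i ^ k) v) := by
      intro i j k l v
      rw [← Module.End.mul_apply, ((hcomm i j).pow_pow k l).eq, Module.End.mul_apply]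
    refine ⟨⨆ j ∈ Finset.range (m a + 1), V.map (T a ^ j), ?_, ?_, h3.trans hV, hV h4, ?_, ?_⟩
    · exact Submodule.fg_biSup _ _ fun j _ => h1.map _
    · refine iSup₂_le fun j hj => ?_
      rintro _ ⟨v, hv, rfl⟩
      exact hCp a j v (h2 hv)
    · intro i hi
      rcases Finset.mem_insert.1 hi with rfl | hi
      · refine ind _ (T i) fun j hj v hv => ?_
        rw [← Module.End.mul_apply, ← pow_succ']
        rcases hj.eq_or_lt with rfl | hj
        · rw [pow_succ', Module.End.mul_apply]
          exact hV (h3 (hU _ _ (h6 _ _ hv)))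
        · exact hle (j + 1) (by simpa using hj) ⟨v, hv, rfl⟩
      · refine ind _ (T i) fun j hj v hv => ?_
        have := hcp i a 1 j v
        rw [pow_one] at this
        rw [this]
        exact hle j (by simp; omega) ⟨_, h5 i hi v hv, rfl⟩
    · intro i
      refine ind _ (T i ^ m i) fun j hj v hv => ?_
      rw [hcp]
      exact hUp a j _ (h6 i v hv)

lemma tr_neg_mem {d : ℕ} (V : Submodule ℂ ((Fin d → ℝ) → ℂ)) (hfg : V.FG) (h : Fin d → ℝ)
    (hinv : ∀ v ∈ V, tr h v ∈ V) : ∀ v ∈ V, tr (-h) v ∈ V := by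
  have : FiniteDimensional ℂ V := Module.Finite.of_fg hfg
  let T : V →ₗ[ℂ] V := (tr h).toLinearMap.restrict hinv
  have hinj : Function.Injective T := by
    intro u v huv
    ext x
    have := congrFun (congrArg Subtype.val huv) (x - h)
    change u.1 (x - h + h) = v.1 (x - h + h) at this
    simpa using this
  intro v hv
  obtain ⟨u, hu⟩ := (LinearMap.injective_iff_surjective.1 hinj) ⟨v, hv⟩
  have : tr (-h) v = u.1 := by
    have hu' : tr h u.1 = v := congrArg Subtype.val hu
    rw [← hu']
    funext x
    simp [tr_apply]
  rw [this]; exact u.2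

end Stmt4Aux

open Stmt4Aux in
theorem stmt4 (d t : ℕ) (hd : 0 < d) (ht : 0 < t) (h : Fin t → Fin d → ℝ)
    (hdense : Dense ((AddSubgroup.closure (Set.range h) :
      AddSubgroup (Fin d → ℝ)) : Set (Fin d → ℝ)))
    (f : (Fin d → ℝ) → ℂ) (hf : Continuous f)
    (m : Fin t → ℕ)
    (hexp : ∀ k, IsExpPoly d ((fd (h k))^[m k] f)) :
    IsExpPoly d f := by
  have hgood := fun k => good_of_isExpPoly (hexp k)
  choose U hU1 hU2 hU3 hU4 using hgood
  let C : Submodule ℂ ((Fin d → ℝ) → ℂ) :=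
    { carrier := {g | Continuous g}
      add_mem' := fun ha hb => Continuous.add ha hb
      zero_mem' := continuous_const
      smul_mem' := fun c _ hg => Continuous.mul (continuous_const (y := c)) hg }
  let T : Fin t → Module.End ℂ ((Fin d → ℝ) → ℂ) := fun k => (tr (h k)).toLinearMap - 1
  have hT : ∀ k g, T k g = tr (h k) g - g := fun k g => rfl
  have hTfd : ∀ k (n : ℕ) g, (T k ^ n) g = (fd (h k))^[n] g := by
    intro k n g
    rw [Module.End.pow_apply]
    rfl
  have hcomm : ∀ i j, Commute (T i) (T j) := by
    intro i j
    refine LinearMap.ext fun g => ?_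
    funext x
    simp only [Module.End.mul_apply, hT, Pi.sub_apply, tr_apply, map_sub]
    rw [add_right_comm]
    ring
  obtain ⟨V, h1, h2, h3, h4, h5, -⟩ := exists_invariant T hcomm m (⨆ k, U k) C
    (Submodule.fg_iSup _ hU1)
    (by
      intro i u hu
      have : (⨆ k, U k) ≤ (⨆ k, U k).comap (T i) := by
        refine iSup_le fun k u hu => ?_
        rw [Submodule.mem_comap, hT]
        exact Submodule.mem_iSup_of_mem k ((U k).sub_mem (hU3 k _ u hu) hu)
      exact this hu)
    (iSup_le fun k u hu => hU2 k u hu)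
    (by
      intro i u hu
      rw [hT]
      have hu' : Continuous u := hu
      exact (hu'.comp (continuous_id.add continuous_const)).sub hu')
    f hf
    (fun k => by rw [hTfd]; exact Submodule.mem_iSup_of_mem k (hU4 k))
    Finset.univ
  have hgen : ∀ k, ∀ v ∈ V, tr (h k) v ∈ V := by
    intro k v hv
    have := V.add_mem (h5 k (Finset.mem_univ k) v hv) hv
    rwa [hT, sub_add_cancel] at this
  have hgrp : ∀ y ∈ AddSubgroup.closure (Set.range h), ∀ v ∈ V, tr y v ∈ V := by
    intro y hy
    induction hy using AddSubgroup.closure_induction with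
    | mem x hx => obtain ⟨k, rfl⟩ := hx; exact hgen k
    | zero => 
      intro v hv
      have : tr 0 v = v := by funext x; simp [tr_apply]
      rwa [this]
    | add x y _ _ hx hy =>
      intro v hv
      have : tr (x + y) v = tr x (tr y v) := by funext z; simp [tr_apply, add_assoc]
      rw [this]; exact hx _ (hy _ hv)
    | neg x _ hx => exact tr_neg_mem V h1 x hx
  have : FiniteDimensional ℂ V := Module.Finite.of_fg h1
  have hclosed : IsClosed (V : Set ((Fin d → ℝ) → ℂ)) := Submodule.closed_of_finiteDimensional V
  refine isExpPoly_of_invariant V h1 (fun v hv => h2 hv) ?_ f h4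
  intro y v hv
  have hvc : Continuous v := h2 hv
  have hcl : IsClosed {y | tr y v ∈ V} := by
    refine hclosed.preimage (f := fun y => tr y v) ?_
    refine continuous_pi fun x => ?_
    exact hvc.comp (continuous_const.add continuous_id)
  have : closure ((AddSubgroup.closure (Set.range h) :
      AddSubgroup (Fin d → ℝ)) : Set (Fin d → ℝ)) ⊆ {y | tr y v ∈ V} :=
    closure_minimal (fun y hy => hgrp y hy v hv) hcl
  exact this (hdense y)
end
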